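/- Fix a real number a with 1 < a ≤ 3^{1/5} and n ∈ ℕ, and set uₙ := 3^{−n/5} aⁿ (so that 0 < uₙ ≤ 1). Then ∫_0^{uₙ} 3ⁿ a^{−4n} u³ |cos(aⁿ/u)| du ≥ 3^{n/5} / (2π (1 + 2π)⁴). -/

import Mathlib

theorem aux_integrable (A b : ℝ) :
    MeasureTheory.IntegrableOn (fun u : ℝ => u ^ 3 * |Real.cos (A / u)|) (Set.Ioc 0 b) := by
  have h1 : MeasureTheory.IntegrableOn (fun u : ℝ => u ^ 3) (Set.Ioc 0 b) :=
    ((continuous_pow 3).integrableOn_Icc (a := 0) (b := b)).mono_set Set.Ioc_subset_Icc_self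
  refine MeasureTheory.Integrable.mono h1 ?_ ?_
  · exact Measurable.aestronglyMeasurable (by fun_prop)
  · refine Filter.Eventually.of_forall fun u => ?_
    rw [norm_mul]
    refine mul_le_of_le_one_right (norm_nonneg _) ?_
    rw [Real.norm_eq_abs, abs_abs]
    exact Real.abs_cos_le_one _

theorem aux_bound (A b : ℝ) (hb : 0 < b) (hA : b ≤ A) :
    b ^ 4 / 1024 ≤ ∫ u in Set.Ioc (0 : ℝ) b, u ^ 3 * |Real.cos (A / u)| := by
  have hA0 : 0 < A := hb.trans_le hA
  have hc : 0 < b / 4 := by positivity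
  have hcb : b / 4 ≤ b := by linarith
  have hsub : Set.Ioc (b / 4) b ⊆ Set.Ioc 0 b := Set.Ioc_subset_Ioc_left hc.le
  have hint := aux_integrable A b
  have h1 : ∫ u in Set.Ioc (b / 4) b, u ^ 3 * |Real.cos (A / u)| ≤
      ∫ u in Set.Ioc (0 : ℝ) b, u ^ 3 * |Real.cos (A / u)| := by
    refine MeasureTheory.setIntegral_mono_set hint ?_ hsub.eventuallyLE
    filter_upwards [MeasureTheory.ae_restrict_mem measurableSet_Ioc] with u hu
    have := hu.1
    simp only [Pi.zero_apply]
    positivity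
  have hcont : ContinuousOn (fun u : ℝ => Real.cos (A / u) ^ 2 / u ^ 2) (Set.uIcc (b / 4) b) := by
    rw [Set.uIcc_of_le hcb]
    have hne : ∀ u ∈ Set.Icc (b / 4) b, u ≠ 0 := fun u hu => (hc.trans_le hu.1).ne'
    refine ContinuousOn.div (ContinuousOn.pow (Real.continuous_cos.comp_continuousOn
      (continuousOn_const.div continuousOn_id hne)) 2) (by fun_prop) ?_
    intro u hu
    exact pow_ne_zero 2 (hne u hu)
  have hii := hcont.intervalIntegrable (μ := MeasureTheory.volume)
  have hF : ∫ u in (b / 4)..b, Real.cos (A / u) ^ 2 / u ^ 2 =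
      (-(1 / 2) * b⁻¹ - Real.sin (2 * A * b⁻¹) / (4 * A)) -
      (-(1 / 2) * (b / 4)⁻¹ - Real.sin (2 * A * (b / 4)⁻¹) / (4 * A)) := by
    refine intervalIntegral.integral_eq_sub_of_hasDerivAt
      (f := fun u => -(1 / 2) * u⁻¹ - Real.sin (2 * A * u⁻¹) / (4 * A)) ?_ hii
    intro u hu
    rw [Set.uIcc_of_le hcb] at hu
    have hu0 : u ≠ 0 := (hc.trans_le hu.1).ne'
    have hinv := hasDerivAt_inv hu0
    have := (hinv.const_mul (-(1 / 2))).sub (((hinv.const_mul (2 * A)).sin).div_const (4 * A))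
    refine this.congr_deriv ?_
    have e : 2 * A * u⁻¹ = 2 * (A / u) := by ring
    rw [e, Real.cos_two_mul]
    field_simp
    ring
  have h2 : (b / 4) ^ 5 * (1 / b) ≤
      ∫ u in Set.Ioc (b / 4) b, (b / 4) ^ 5 * (Real.cos (A / u) ^ 2 / u ^ 2) := by
    rw [MeasureTheory.integral_const_mul, ← intervalIntegral.integral_of_le hcb, hF]
    refine mul_le_mul_of_nonneg_left ?_ (by positivity)
    have s1 : Real.sin (2 * A * b⁻¹) / (4 * A) ≤ 1 / (4 * A) := by
      gcongr
      exact Real.sin_le_one _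
    have s2 : (-1) / (4 * A) ≤ Real.sin (2 * A * (b / 4)⁻¹) / (4 * A) := by
      gcongr
      exact Real.neg_one_le_sin _
    have e1 : 1 / (4 * A) = A⁻¹ / 4 := by field_simp
    have e2 : (-1) / (4 * A) = -(A⁻¹ / 4) := by field_simp
    have e3 : (b / 4)⁻¹ = 4 * b⁻¹ := by field_simp
    have e4 : A⁻¹ ≤ b⁻¹ := inv_anti₀ hb hA
    have e5 : 1 / b = b⁻¹ := one_div b
    rw [e1] at s1
    rw [e2] at s2
    have e6 : (-(1 / 2)) * (b / 4)⁻¹ = -2 * b⁻¹ := by rw [e3]; ring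
    rw [e5, e6]
    linarith
  have h3 : ∫ u in Set.Ioc (b / 4) b, (b / 4) ^ 5 * (Real.cos (A / u) ^ 2 / u ^ 2) ≤
      ∫ u in Set.Ioc (b / 4) b, u ^ 3 * |Real.cos (A / u)| := by
    refine MeasureTheory.setIntegral_mono_on ?_ (hint.mono_set hsub) measurableSet_Ioc ?_
    · exact (((intervalIntegrable_iff_integrableOn_Ioc_of_le hcb).1 hii).const_mul _)
    · intro u hu
      have hu0 : 0 < u := hc.trans hu.1
      have k1 : Real.cos (A / u) ^ 2 ≤ |Real.cos (A / u)| := by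
        rw [← sq_abs]
        nlinarith [abs_nonneg (Real.cos (A / u)), Real.abs_cos_le_one (A / u)]
      have k2 : (b / 4) ^ 5 ≤ u ^ 5 := pow_le_pow_left₀ hc.le hu.1.le 5
      calc (b / 4) ^ 5 * (Real.cos (A / u) ^ 2 / u ^ 2)
          ≤ u ^ 5 * (|Real.cos (A / u)| / u ^ 2) := by gcongr
        _ = u ^ 3 * |Real.cos (A / u)| := by field_simp
  have h4 : (b / 4) ^ 5 * (1 / b) = b ^ 4 / 1024 := by field_simp; norm_num
  linarith

/-- Case `1 < a ≤ 3^{1/5}`, key lower bound: with `uₙ = 3^{-n/5} aⁿ`,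
`∫_0^{uₙ} 3ⁿ a^{-4n} u³ |cos(aⁿ/u)| du ≥ 3^{n/5} / (2π (1 + 2π)⁴)`,
the integral being the Lebesgue integral over `(0, uₙ]`. -/
theorem integral_lower_bound_small_case (a : ℝ) (ha1 : 1 < a)
    (ha2 : a ≤ (3 : ℝ) ^ ((1 : ℝ) / 5)) (n : ℕ) :
    (3 : ℝ) ^ ((n : ℝ) / 5) / (2 * Real.pi * (1 + 2 * Real.pi) ^ 4) ≤
      ∫ u in Set.Ioc (0 : ℝ) ((3 : ℝ) ^ (-(n : ℝ) / 5) * a ^ n),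
        3 ^ n * (a ^ (4 * n))⁻¹ * u ^ 3 * |Real.cos (a ^ n / u)| := by
  have hA : 0 < a ^ n := by positivity
  have hq : 1 ≤ (3 : ℝ) ^ ((n : ℝ) / 5) := Real.one_le_rpow (by norm_num) (by positivity)
  have hq5 : ((3 : ℝ) ^ ((n : ℝ) / 5)) ^ 5 = 3 ^ n := by
    rw [← Real.rpow_natCast, ← Real.rpow_mul (by norm_num), ← Real.rpow_natCast]
    congr 1
    push_cast
    ring
  have hr : (3 : ℝ) ^ (-(n : ℝ) / 5) = ((3 : ℝ) ^ ((n : ℝ) / 5))⁻¹ := by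
    rw [neg_div, Real.rpow_neg (by norm_num)]
  rw [hr, ← hq5, mul_comm 4 n, pow_mul]
  generalize (3 : ℝ) ^ ((n : ℝ) / 5) = q at *
  generalize a ^ n = A at *
  have hq0 : 0 < q := by linarith
  have hb : 0 < q⁻¹ * A := by positivity
  have hbA : q⁻¹ * A ≤ A := mul_le_of_le_one_left hA.le (inv_le_one_of_one_le₀ hq)
  have key := aux_bound A (q⁻¹ * A) hb hbA
  simp_rw [mul_assoc (q ^ 5 * (A ^ 4)⁻¹)]
  rw [MeasureTheory.integral_const_mul]
  have hpi := Real.pi_gt_three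
  have hK : (1024 : ℝ) ≤ 2 * Real.pi * (1 + 2 * Real.pi) ^ 4 := by
    calc (1024 : ℝ) ≤ 2 * 3 * (1 + 2 * 3) ^ 4 := by norm_num
      _ ≤ _ := by gcongr
  calc q / (2 * Real.pi * (1 + 2 * Real.pi) ^ 4) ≤ q / 1024 := by gcongr
    _ = q ^ 5 * (A ^ 4)⁻¹ * ((q⁻¹ * A) ^ 4 / 1024) := by field_simp
    _ ≤ _ := by gcongr
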